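/- The map Φ⁻¹ : M³ → M³ given by Φ⁻¹(x,y,z) = (m(x,y), m(y,z), m(z,x)), where m is the midpoint map of the solvable symmetric surface, has Jacobian determinant at (x₀,x₁,x₂) equal to (1/16)·sech(2(a₀−a₁))·sech(2(a₁−a₂))·sech(2(a₂−a₀)). -/

import Mathlib

noncomputable def midM (x y : ℝ × ℝ) : ℝ × ℝ :=
  ((x.1 + y.1) / 2, (x.2 + y.2) / (2 * Real.cosh (2 * (x.1 - y.1))))

/-- The map Φ⁻¹(x,y,z) = (m(x,y), m(y,z), m(z,x)). -/
noncomputable def PhiInv (p : (ℝ × ℝ) × (ℝ × ℝ) × (ℝ × ℝ)) :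
    (ℝ × ℝ) × (ℝ × ℝ) × (ℝ × ℝ) :=
  (midM p.1 p.2.1, midM p.2.1 p.2.2, midM p.2.2 p.1)

lemma midM_deriv (q : (ℝ × ℝ) × (ℝ × ℝ)) : ∃ (c : ℝ)
    (L : ((ℝ × ℝ) × (ℝ × ℝ)) →L[ℝ] (ℝ × ℝ)),
    HasFDerivAt (fun q : (ℝ × ℝ) × (ℝ × ℝ) => midM q.1 q.2) L q ∧
    ∀ v, L v = ((v.1.1 + v.2.1) / 2,
      (v.1.2 + v.2.2) / (2 * Real.cosh (2 * (q.1.1 - q.2.1))) + c * (v.1.1 - v.2.1)) := by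
  have h11 : HasFDerivAt (fun q : (ℝ × ℝ) × (ℝ × ℝ) => q.1.1) _ q :=
    ((ContinuousLinearMap.fst ℝ ℝ ℝ).comp (ContinuousLinearMap.fst ℝ (ℝ × ℝ) (ℝ × ℝ))).hasFDerivAt
  have h12 : HasFDerivAt (fun q : (ℝ × ℝ) × (ℝ × ℝ) => q.1.2) _ q :=
    ((ContinuousLinearMap.snd ℝ ℝ ℝ).comp (ContinuousLinearMap.fst ℝ (ℝ × ℝ) (ℝ × ℝ))).hasFDerivAt
  have h21 : HasFDerivAt (fun q : (ℝ × ℝ) × (ℝ × ℝ) => q.2.1) _ q :=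
    ((ContinuousLinearMap.fst ℝ ℝ ℝ).comp (ContinuousLinearMap.snd ℝ (ℝ × ℝ) (ℝ × ℝ))).hasFDerivAt
  have h22 : HasFDerivAt (fun q : (ℝ × ℝ) × (ℝ × ℝ) => q.2.2) _ q :=
    ((ContinuousLinearMap.snd ℝ ℝ ℝ).comp (ContinuousLinearMap.snd ℝ (ℝ × ℝ) (ℝ × ℝ))).hasFDerivAt
  have hc : ∀ t : ℝ, Real.cosh t ≠ 0 := fun t => (Real.cosh_pos t).ne'
  have hs : HasDerivAt (fun t : ℝ => (2 * Real.cosh (2 * t))⁻¹) _ (q.1.1 - q.2.1) :=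
    ((((hasDerivAt_id _).const_mul 2).cosh).const_mul 2).inv (by simpa using hc _)
  have h1 := (h11.add h21).mul_const (2⁻¹ : ℝ)
  have h2 := (h12.add h22).mul (hs.comp_hasFDerivAt q (h11.sub h21))
  have h := h1.prodMk h2
  refine ⟨(q.1.2 + q.2.2) * (deriv (fun t : ℝ => (2 * Real.cosh (2 * t))⁻¹) (q.1.1 - q.2.1)),
    _, h, ?_⟩
  intro v
  rw [hs.deriv]
  ext
  · simp
    ring
  · simp
    ring

/-- Regrouping of coordinates. -/
def coordE : (Fin 3 ⊕ Fin 3 → ℝ) ≃ₗ[ℝ] (ℝ × ℝ) × (ℝ × ℝ) × (ℝ × ℝ) where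
  toFun f := ((f (.inl 0), f (.inr 0)), (f (.inl 1), f (.inr 1)), (f (.inl 2), f (.inr 2)))
  invFun p := Sum.elim ![p.1.1, p.2.1.1, p.2.2.1] ![p.1.2, p.2.1.2, p.2.2.2]
  map_add' _ _ := rfl
  map_smul' _ _ := rfl
  left_inv f := by
    ext i
    rcases i with i | i <;> fin_cases i <;> rfl
  right_inv _ := rfl

lemma coordE_apply (f : Fin 3 ⊕ Fin 3 → ℝ) : coordE f =
    ((f (.inl 0), f (.inr 0)), (f (.inl 1), f (.inr 1)), (f (.inl 2), f (.inr 2))) := rfl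

lemma coordE_symm_apply (p : (ℝ × ℝ) × (ℝ × ℝ) × (ℝ × ℝ)) : coordE.symm p =
    Sum.elim ![p.1.1, p.2.1.1, p.2.2.1] ![p.1.2, p.2.1.2, p.2.2.2] := rfl

/-- Jacobian determinant of Φ⁻¹. -/
theorem jacobian_PhiInv (x₀ x₁ x₂ : ℝ × ℝ) :
    (fderiv ℝ PhiInv (x₀, x₁, x₂)).det =
      (1 / 16) * (1 / Real.cosh (2 * (x₀.1 - x₁.1))) *
        (1 / Real.cosh (2 * (x₁.1 - x₂.1))) *
        (1 / Real.cosh (2 * (x₂.1 - x₀.1))) := by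
  obtain ⟨c₀, L₀, h₀, e₀⟩ := midM_deriv (x₀, x₁)
  obtain ⟨c₁, L₁, h₁, e₁⟩ := midM_deriv (x₁, x₂)
  obtain ⟨c₂, L₂, h₂, e₂⟩ := midM_deriv (x₂, x₀)
  let P0 := ContinuousLinearMap.fst ℝ (ℝ × ℝ) ((ℝ × ℝ) × (ℝ × ℝ))
  let Q := ContinuousLinearMap.snd ℝ (ℝ × ℝ) ((ℝ × ℝ) × (ℝ × ℝ))
  let P1 := (ContinuousLinearMap.fst ℝ (ℝ × ℝ) (ℝ × ℝ)).comp Q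
  let P2 := (ContinuousLinearMap.snd ℝ (ℝ × ℝ) (ℝ × ℝ)).comp Q
  have k₀ := HasFDerivAt.comp (x₀, x₁, x₂) (f := P0.prod P1) h₀ (P0.prod P1).hasFDerivAt
  have k₁ := HasFDerivAt.comp (x₀, x₁, x₂) (f := P1.prod P2) h₁ (P1.prod P2).hasFDerivAt
  have k₂ := HasFDerivAt.comp (x₀, x₁, x₂) (f := P2.prod P0) h₂ (P2.prod P0).hasFDerivAt
  have k : HasFDerivAt PhiInv _ (x₀, x₁, x₂) := k₀.prodMk (k₁.prodMk k₂)
  rw [k.fderiv, ContinuousLinearMap.det, ← LinearMap.det_conj _ coordE.symm,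
    ← LinearMap.det_toMatrix']
  set u := Real.cosh (2 * (x₀.1 - x₁.1))
  set v := Real.cosh (2 * (x₁.1 - x₂.1))
  set w := Real.cosh (2 * (x₂.1 - x₀.1))
  have key : ∀ M : Matrix (Fin 3 ⊕ Fin 3) (Fin 3 ⊕ Fin 3) ℝ,
      M = Matrix.fromBlocks !![1/2, 1/2, 0; 0, 1/2, 1/2; 1/2, 0, 1/2] 0
        !![c₀, -c₀, 0; 0, c₁, -c₁; -c₂, 0, c₂]
        !![1/(2*u), 1/(2*u), 0; 0, 1/(2*v), 1/(2*v); 1/(2*w), 0, 1/(2*w)] →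
      M.det = (1 / 16) * (1 / u) * (1 / v) * (1 / w) := by
    rintro M rfl
    rw [Matrix.det_fromBlocks_zero₁₂, Matrix.det_fin_three, Matrix.det_fin_three]
    simp
    ring
  apply key
  ext i j
  rcases i with i | i <;> rcases j with j | j <;> fin_cases i <;> fin_cases j <;>
    simp [LinearMap.toMatrix'_apply, coordE_apply, coordE_symm_apply, e₀, e₁, e₂, P0, P1, P2, Q]
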